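/- (Complete-case conditional contrast.) Fix d in {(1,1),(0,1),(1,0)} and d' = (0,0), with P(D = d | X) > 0 and P(D = d' | X) > 0 a.s., P(D = d, S = 1) > 0 and P(D = d', S = 1) > 0. Suppose Assumption DID holds for d and for d', and Assumption MAR holds. Then E[ΔY | D = d, S = 1, X] − E[ΔY | D = d', S = 1, X] = E[Y2(d) − Y2(d') | D = d, X] a.s. -/

import Mathlib

open MeasureTheory Set
open scoped Classical

noncomputable section

namespace DIDMissing

variable {Ω : Type*} {𝓧 : Type*}

/-- Real-valued indicator of a set. -/
def ind (A : Set Ω) : Ω → ℝ := A.indicator fun _ => (1 : ℝ)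

/-- All treatment paths `{0,1}²` (coded as reals). -/
def allPaths : Set (ℝ × ℝ) := {(0, 0), (0, 1), (1, 0), (1, 1)}

/-- The three treated paths `{(1,1), (0,1), (1,0)}`. -/
def threePaths : Set (ℝ × ℝ) := {(1, 1), (0, 1), (1, 0)}

/-- The event `{D = d}` for a treatment path `d = (d₁, d₂)`. -/
def evD (D1 D2 : Ω → ℝ) (d : ℝ × ℝ) : Set Ω := {ω | D1 ω = d.1 ∧ D2 ω = d.2}

/-- The event `{D₂ = b}`. -/
def evD2 (D2 : Ω → ℝ) (b : ℝ) : Set Ω := {ω | D2 ω = b}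

/-- `g` is a (measurable-in-the-covariate) version of the conditional mean `E[Z ∣ A, X]`:
for every bounded measurable `h`, `E[1_A · Z · h(X)] = E[1_A · g(X) · h(X)]`. -/
def IsCondMeanGiven [MeasurableSpace Ω] [MeasurableSpace 𝓧] (P : Measure Ω) (X : Ω → 𝓧)
    (A : Set Ω) (Z : Ω → ℝ) (g : 𝓧 → ℝ) : Prop :=
  Measurable g ∧
    ∀ h : 𝓧 → ℝ, Measurable h → (∃ C, ∀ x, |h x| ≤ C) →
      ∫ ω, ind A ω * Z ω * h (X ω) ∂P = ∫ ω, ind A ω * g (X ω) * h (X ω) ∂P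

/-- Assumption DID for a path `d` relative to `d' = (0,0)`:
(i) no anticipation, `E[Y₀(d) ∣ D = d, X] = E[Y₀(0,0) ∣ D = d, X]` a.s., stated in the
version-free integral form; and (ii) conditional parallel trends, stated as the existence
of a common version of `E[Y₂(0,0) − Y₀(0,0) ∣ X]` and `E[Y₂(0,0) − Y₀(0,0) ∣ D = d, X]`. -/
def DID [MeasurableSpace Ω] [MeasurableSpace 𝓧] (P : Measure Ω) (X : Ω → 𝓧)
    (D1 D2 : Ω → ℝ) (Y0p Y2p : ℝ × ℝ → Ω → ℝ) (d : ℝ × ℝ) : Prop :=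
  (∀ h : 𝓧 → ℝ, Measurable h → (∃ C, ∀ x, |h x| ≤ C) →
      ∫ ω, ind (evD D1 D2 d) ω * Y0p d ω * h (X ω) ∂P
        = ∫ ω, ind (evD D1 D2 d) ω * Y0p (0, 0) ω * h (X ω) ∂P) ∧
  (∃ tr : 𝓧 → ℝ,
      IsCondMeanGiven P X Set.univ (fun ω => Y2p (0, 0) ω - Y0p (0, 0) ω) tr ∧
      IsCondMeanGiven P X (evD D1 D2 d) (fun ω => Y2p (0, 0) ω - Y0p (0, 0) ω) tr)

/-- Assumption MAR: `S ⟂ (D₁, ΔY) ∣ (D₂, X)`, where `q d₂` is a version of the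
missing-data probability `P(S = 1 ∣ D₂ = d₂, X)`, which is `(0,1]`-valued a.s. -/
def MAR [MeasurableSpace Ω] [MeasurableSpace 𝓧] (P : Measure Ω) (X : Ω → 𝓧)
    (D1 D2 S Y0 Y2 : Ω → ℝ) (q : ℝ → 𝓧 → ℝ) : Prop :=
  (∀ d2 ∈ ({0, 1} : Set ℝ), IsCondMeanGiven P X (evD2 D2 d2) S (q d2)) ∧
  (∀ d2 ∈ ({0, 1} : Set ℝ), ∀ᵐ ω ∂P, 0 < q d2 (X ω) ∧ q d2 (X ω) ≤ 1) ∧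
  (∀ d2 ∈ ({0, 1} : Set ℝ), ∀ f : ℝ × ℝ → ℝ, Measurable f → (∃ C, ∀ p, |f p| ≤ C) →
      ∀ h : 𝓧 → ℝ, Measurable h → (∃ C, ∀ x, |h x| ≤ C) →
        ∫ ω, ind (evD2 D2 d2) ω * S ω * f (D1 ω, Y2 ω - Y0 ω) * h (X ω) ∂P
          = ∫ ω, ind (evD2 D2 d2) ω * q d2 (X ω) * f (D1 ω, Y2 ω - Y0 ω) * h (X ω) ∂P)

/-- The path-dependent ATT `τ_{d,(0,0)} = E[Y₂(d) − Y₂(0,0) ∣ D = d]`. -/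
def tau [MeasurableSpace Ω] (P : Measure Ω) (D1 D2 : Ω → ℝ)
    (Y2p : ℝ × ℝ → Ω → ℝ) (d : ℝ × ℝ) : ℝ :=
  (P (evD D1 D2 d)).toReal⁻¹ * ∫ ω in evD D1 D2 d, (Y2p d ω - Y2p (0, 0) ω) ∂P

def sg (u : 𝓧 → ℝ) : 𝓧 → ℝ := fun x => if 0 ≤ u x then 1 else -1

lemma sg_meas [MeasurableSpace 𝓧] {u : 𝓧 → ℝ} (hu : Measurable u) : Measurable (sg u) :=
  Measurable.ite (measurableSet_le measurable_const hu) measurable_const measurable_const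

lemma sg_abs (u : 𝓧 → ℝ) (x : 𝓧) : |sg u x| = 1 := by
  unfold sg; split_ifs <;> simp

lemma sg_mul (u : 𝓧 → ℝ) (x : 𝓧) : u x * sg u x = |u x| := by
  unfold sg; split_ifs with h
  · simp [abs_of_nonneg h]
  · simp [abs_of_neg (not_le.mp h)]

lemma ind_meas [MeasurableSpace Ω] {A : Set Ω} (hA : MeasurableSet A) : Measurable (ind A) :=
  measurable_const.indicator hA

lemma ind_cases (A : Set Ω) (ω : Ω) : (ω ∈ A ∧ ind A ω = 1) ∨ (ω ∉ A ∧ ind A ω = 0) := by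
  by_cases h : ω ∈ A <;> simp [ind, h]

lemma ind_abs_le (A : Set Ω) (ω : Ω) : |ind A ω| ≤ 1 := by
  rcases ind_cases A ω with h | h <;> simp [h.2]

lemma ind_nonneg (A : Set Ω) (ω : Ω) : 0 ≤ ind A ω := by
  rcases ind_cases A ω with h | h <;> simp [h.2]

lemma int_mul [MeasurableSpace Ω] {P : Measure Ω} {Z b : Ω → ℝ} (hZ : Integrable Z P)
    (hb : Measurable b) (C : ℝ) (hC : ∀ ω, |b ω| ≤ C) : Integrable (fun ω => Z ω * b ω) P := by
  have := hZ.bdd_mul (g := Z) (f := b) (c := C) hb.aestronglyMeasurable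
    (Filter.Eventually.of_forall hC)
  exact this.congr (Filter.Eventually.of_forall fun ω => mul_comm _ _)

lemma int_ind_mul [MeasurableSpace Ω] {P : Measure Ω} {A : Set Ω} (hA : MeasurableSet A)
    {Z : Ω → ℝ} (hZ : Integrable Z P) : Integrable (fun ω => ind A ω * Z ω) P :=
  (int_mul hZ (ind_meas hA) 1 (ind_abs_le A)).congr
    (Filter.Eventually.of_forall fun ω => mul_comm _ _)

lemma cm_int [MeasurableSpace Ω] [MeasurableSpace 𝓧] {P : Measure Ω} [IsProbabilityMeasure P]
    {X : Ω → 𝓧} (hX : Measurable X) {A : Set Ω} (hA : MeasurableSet A) {Z : Ω → ℝ}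
    (hZ : Integrable Z P) {g : 𝓧 → ℝ} (hg : IsCondMeanGiven P X A Z g) :
    Integrable (fun ω => ind A ω * g (X ω)) P := by
  obtain ⟨hgm, hg⟩ := hg
  have hgX : Measurable fun ω => g (X ω) := hgm.comp hX
  have hcov : AECover P Filter.atTop (fun n : ℕ => {ω | |g (X ω)| ≤ n}) := by
    refine ⟨Filter.Eventually.of_forall fun ω => ?_, fun n =>
      measurableSet_le hgX.abs measurable_const⟩
    obtain ⟨N, hN⟩ := exists_nat_ge |g (X ω)|
    filter_upwards [Filter.eventually_ge_atTop N] with n hn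
    exact hN.trans (by exact_mod_cast hn)
  have hm : Measurable fun ω => ind A ω * g (X ω) := (ind_meas hA).mul hgX
  refine hcov.integrable_of_integral_norm_bounded (∫ ω, |Z ω| ∂P) (fun n => ?_)
    (Filter.Eventually.of_forall fun n => ?_)
  · refine Measure.integrableOn_of_bounded (M := n) (measure_ne_top _ _) hm.aestronglyMeasurable ?_
    refine (ae_restrict_iff' (measurableSet_le hgX.abs measurable_const)).2
      (Filter.Eventually.of_forall fun ω hω => ?_)
    rw [Real.norm_eq_abs, abs_mul]
    have h1 := ind_abs_le A ω
    have h2 : |g (X ω)| ≤ n := hω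
    nlinarith [abs_nonneg (ind A ω), abs_nonneg (g (X ω))]
  · have hBm : MeasurableSet {x | |g x| ≤ (n:ℝ)} := measurableSet_le hgm.abs measurable_const
    have hb : ∀ x, |sg g x * ind {x | |g x| ≤ (n:ℝ)} x| ≤ 1 := fun x => by
      rw [abs_mul, sg_abs, one_mul]; exact ind_abs_le _ _
    have hhm : Measurable fun x => sg g x * ind {x | |g x| ≤ (n:ℝ)} x :=
      (sg_meas hgm).mul (ind_meas hBm)
    have key := hg (fun x => sg g x * ind {x | |g x| ≤ (n:ℝ)} x) hhm ⟨1, hb⟩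
    rw [← integral_indicator (measurableSet_le hgX.abs measurable_const)]
    have : ∀ ω, ({ω | |g (X ω)| ≤ n} : Set Ω).indicator (fun ω => ‖ind A ω * g (X ω)‖) ω
        = ind A ω * g (X ω) * (sg g (X ω) * ind {x | |g x| ≤ (n:ℝ)} (X ω)) := by
      intro ω
      have := sg_mul g (X ω)
      by_cases h : |g (X ω)| ≤ n
      · simp only [Set.indicator, Set.mem_setOf_eq, h, ind, if_true, Real.norm_eq_abs, abs_mul,
          ← this]
        split_ifs <;> simp
      · simp [Set.indicator, h, ind]
    simp only [this]
    rw [← key]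
    refine integral_mono (int_mul (int_ind_mul hA hZ) (hhm.comp hX) 1 (fun ω => hb _)) hZ.abs
      fun ω => ?_
    refine (le_abs_self _).trans ?_
    show |ind A ω * Z ω * (sg g (X ω) * ind {x | |g x| ≤ (n:ℝ)} (X ω))| ≤ |Z ω|
    rw [abs_mul, abs_mul]
    have h1 := ind_abs_le A ω
    have h2 := hb (X ω)
    calc _ ≤ 1 * |Z ω| * 1 := by gcongr
      _ = _ := by ring

lemma zero_on [MeasurableSpace Ω] [MeasurableSpace 𝓧] {P : Measure Ω}
    {X : Ω → 𝓧} {A : Set Ω} {u : 𝓧 → ℝ} (hu : Measurable u)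
    (hi : Integrable (fun ω => ind A ω * u (X ω)) P)
    (h0 : ∀ h : 𝓧 → ℝ, Measurable h → (∃ C, ∀ x, |h x| ≤ C) →
      ∫ ω, ind A ω * u (X ω) * h (X ω) ∂P = 0) :
    ∀ᵐ ω ∂P, ω ∈ A → u (X ω) = 0 := by
  have h1 := h0 (sg u) (sg_meas hu) ⟨1, fun x => (sg_abs u x).le⟩
  have h2 : ∀ ω, ind A ω * u (X ω) * sg u (X ω) = |ind A ω * u (X ω)| := fun ω => by
    rw [mul_assoc, sg_mul, abs_mul, abs_of_nonneg (ind_nonneg A ω)]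
  simp only [h2] at h1
  rw [integral_eq_zero_iff_of_nonneg (fun ω => abs_nonneg _) hi.abs] at h1
  filter_upwards [h1] with ω hω hA
  simpa [ind, hA] using hω

lemma zero_all [MeasurableSpace Ω] [MeasurableSpace 𝓧] {P : Measure Ω} [IsProbabilityMeasure P]
    {X : Ω → 𝓧} (hX : Measurable X) {A : Set Ω} (hA : MeasurableSet A)
    {p : 𝓧 → ℝ} (hp : IsCondMeanGiven P X Set.univ (ind A) p)
    (hpos : ∀ᵐ ω ∂P, 0 < p (X ω)) {u : 𝓧 → ℝ} (hu : Measurable u)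
    (h0 : ∀ᵐ ω ∂P, ω ∈ A → u (X ω) = 0) : ∀ᵐ ω ∂P, u (X ω) = 0 := by
  have hiA : Integrable (ind A) P := (integrable_const (1:ℝ)).indicator hA
  have hpi := cm_int hX MeasurableSet.univ hiA hp
  have hBm : MeasurableSet {x | u x ≠ 0} := (hu (measurableSet_singleton 0)).compl
  have key := hp.2 (ind {x | u x ≠ 0}) (ind_meas hBm) ⟨1, ind_abs_le _⟩
  have hz : ∫ ω, ind Set.univ ω * ind A ω * ind {x | u x ≠ 0} (X ω) ∂P = 0 := by
    refine integral_eq_zero_of_ae ?_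
    filter_upwards [h0] with ω hω
    by_cases h : ω ∈ A
    · simp [ind, hω h]
    · simp [ind, h]
  rw [hz, eq_comm, integral_eq_zero_iff_of_nonneg_ae] at key
  · filter_upwards [key, hpos] with ω h1 h2
    by_contra h
    simp [ind, h] at h1
    exact h2.ne' h1
  · filter_upwards [hpos] with ω h2
    exact mul_nonneg (mul_nonneg (ind_nonneg _ _) h2.le) (ind_nonneg _ _)
  · exact int_mul hpi ((ind_meas hBm).comp hX) 1 (fun ω => ind_abs_le _ _)

lemma evD_meas [MeasurableSpace Ω] {D1 D2 : Ω → ℝ} (hD1 : Measurable D1) (hD2 : Measurable D2)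
    (d : ℝ × ℝ) : MeasurableSet (evD D1 D2 d) :=
  (hD1 (measurableSet_singleton d.1)).inter (hD2 (measurableSet_singleton d.2))

/-- MAR extended to integrable outcomes on `{D = d}`. -/
lemma mar_ext [MeasurableSpace Ω] [MeasurableSpace 𝓧] {P : Measure Ω} [IsProbabilityMeasure P]
    {X : Ω → 𝓧} (hX : Measurable X) {Y0 Y2 D1 D2 S : Ω → ℝ}
    (hD1 : Measurable D1) (hD2 : Measurable D2) (hS : Measurable S)
    (hY0 : Measurable Y0) (hY2 : Measurable Y2)
    (hY0i : Integrable Y0 P) (hY2i : Integrable Y2 P)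
    (hSv : ∀ ω, S ω = 0 ∨ S ω = 1)
    {q : ℝ → 𝓧 → ℝ} (hMAR : MAR P X D1 D2 S Y0 Y2 q)
    (d : ℝ × ℝ) (hd : d.2 ∈ ({0, 1} : Set ℝ))
    (h : 𝓧 → ℝ) (hh : Measurable h) (C : ℝ) (hC : ∀ x, |h x| ≤ C) :
    ∫ ω, ind (evD D1 D2 d ∩ {ω | S ω = 1}) ω * (Y2 ω - Y0 ω) * h (X ω) ∂P
      = ∫ ω, ind (evD D1 D2 d) ω * q d.2 (X ω) * (Y2 ω - Y0 ω) * h (X ω) ∂P := by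
  obtain ⟨hq, hqb, hm⟩ := hMAR
  have hqm : Measurable fun ω => q d.2 (X ω) := (hq _ hd).1.comp hX
  have hqb := hqb _ hd
  have hYm : Measurable fun ω => Y2 ω - Y0 ω := hY2.sub hY0
  have hhX : Measurable fun ω => h (X ω) := hh.comp hX
  have hA := evD_meas hD1 hD2 d
  have hU : MeasurableSet (evD D1 D2 d ∩ {ω | S ω = 1}) :=
    hA.inter (hS (measurableSet_singleton 1))
  have hYi : Integrable (fun ω => C * |Y2 ω - Y0 ω|) P := (hY2i.sub hY0i).abs.const_mul C
  let T : ℕ → ℝ → ℝ := fun n => ind {y : ℝ | |y| ≤ n}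
  have hTm : ∀ n, Measurable (T n) := fun n =>
    ind_meas (measurableSet_le measurable_id.abs measurable_const)
  have hTl : ∀ y : ℝ, Filter.Tendsto (fun n => y * T n y) Filter.atTop (nhds y) := by
    intro y
    refine tendsto_const_nhds.congr' ?_
    obtain ⟨N, hN⟩ := exists_nat_ge |y|
    filter_upwards [Filter.eventually_ge_atTop N] with n hn
    have : |y| ≤ n := hN.trans (by exact_mod_cast hn)
    simp [T, ind, this]
  have hTa : ∀ n y, |y * T n y| ≤ |y| := fun n y => by
    rw [abs_mul]
    have : |T n y| ≤ 1 := ind_abs_le _ _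
    nlinarith [abs_nonneg y]
  have l1 : Filter.Tendsto (fun n : ℕ => ∫ ω, ind (evD D1 D2 d ∩ {ω | S ω = 1}) ω *
      ((Y2 ω - Y0 ω) * T n (Y2 ω - Y0 ω)) * h (X ω) ∂P) Filter.atTop
      (nhds (∫ ω, ind (evD D1 D2 d ∩ {ω | S ω = 1}) ω * (Y2 ω - Y0 ω) * h (X ω) ∂P)) := by
    refine tendsto_integral_of_dominated_convergence _ (fun n => ?_) hYi (fun n => ?_) ?_
    · exact (((ind_meas hU).mul (hYm.mul ((hTm n).comp hYm))).mul hhX).aestronglyMeasurable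
    · refine Filter.Eventually.of_forall fun ω => ?_
      rw [Real.norm_eq_abs, abs_mul, abs_mul]
      calc _ ≤ 1 * |Y2 ω - Y0 ω| * C := 
            mul_le_mul (mul_le_mul (ind_abs_le _ _) (hTa _ _) (abs_nonneg _) zero_le_one) (hC _)
              (abs_nonneg _) (by positivity)
        _ = _ := by ring
    · exact Filter.Eventually.of_forall fun ω => ((hTl _).const_mul _).mul_const _
  have l2 : Filter.Tendsto (fun n : ℕ => ∫ ω, ind (evD D1 D2 d) ω * q d.2 (X ω) *
      ((Y2 ω - Y0 ω) * T n (Y2 ω - Y0 ω)) * h (X ω) ∂P) Filter.atTop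
      (nhds (∫ ω, ind (evD D1 D2 d) ω * q d.2 (X ω) * (Y2 ω - Y0 ω) * h (X ω) ∂P)) := by
    refine tendsto_integral_of_dominated_convergence _ (fun n => ?_) hYi (fun n => ?_) ?_
    · exact ((((ind_meas hA).mul hqm).mul (hYm.mul ((hTm n).comp hYm))).mul
        hhX).aestronglyMeasurable
    · filter_upwards [hqb] with ω hω
      rw [Real.norm_eq_abs, abs_mul, abs_mul, abs_mul]
      calc _ ≤ 1 * 1 * |Y2 ω - Y0 ω| * C := 
            mul_le_mul (mul_le_mul (mul_le_mul (ind_abs_le _ _)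
              ((abs_of_pos hω.1).le.trans hω.2) (abs_nonneg _) zero_le_one) (hTa _ _)
              (abs_nonneg _) (by positivity)) (hC _) (abs_nonneg _) (by positivity)
        _ = _ := by ring
    · exact Filter.Eventually.of_forall fun ω => ((hTl _).const_mul _).mul_const _
  refine tendsto_nhds_unique l1 (l2.congr fun n => ?_)
  have key := hm _ hd (fun p => ind {a : ℝ | a = d.1} p.1 * (p.2 * T n p.2))
    (((ind_meas (measurableSet_singleton d.1)).comp measurable_fst).mul
      ((measurable_id.mul (hTm n)).comp measurable_snd))
    ⟨n, fun p => by
      rw [abs_mul]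
      have h1 := ind_abs_le {a : ℝ | a = d.1} p.1
      have h2 : |p.2 * T n p.2| ≤ n := by
        by_cases hp : |p.2| ≤ n
        · exact (hTa n p.2).trans hp
        · simp [T, ind, hp]
      nlinarith [abs_nonneg (p.2 * T n p.2)]⟩ h hh ⟨C, hC⟩
  have e1 : ∀ ω, ind (evD2 D2 d.2) ω * S ω * (ind {a : ℝ | a = d.1} (D1 ω) *
      ((Y2 ω - Y0 ω) * T n (Y2 ω - Y0 ω))) * h (X ω) =
      ind (evD D1 D2 d ∩ {ω | S ω = 1}) ω *
      ((Y2 ω - Y0 ω) * T n (Y2 ω - Y0 ω)) * h (X ω) := fun ω => by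
    by_cases h1 : D1 ω = d.1 <;> by_cases h2 : D2 ω = d.2 <;> rcases hSv ω with h3 | h3 <;>
      simp [ind, evD, evD2, h1, h2, h3]
  have e2 : ∀ ω, ind (evD2 D2 d.2) ω * q d.2 (X ω) * (ind {a : ℝ | a = d.1} (D1 ω) *
      ((Y2 ω - Y0 ω) * T n (Y2 ω - Y0 ω))) * h (X ω) =
      ind (evD D1 D2 d) ω * q d.2 (X ω) *
      ((Y2 ω - Y0 ω) * T n (Y2 ω - Y0 ω)) * h (X ω) := fun ω => by
    by_cases h1 : D1 ω = d.1 <;> by_cases h2 : D2 ω = d.2 <;>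
      simp [ind, evD, evD2, h1, h2]
  simp only [e1, e2] at key
  exact key.symm

lemma mar_one [MeasurableSpace Ω] [MeasurableSpace 𝓧] {P : Measure Ω}
    {X : Ω → 𝓧} {Y0 Y2 D1 D2 S : Ω → ℝ}
    (hSv : ∀ ω, S ω = 0 ∨ S ω = 1)
    {q : ℝ → 𝓧 → ℝ} (hMAR : MAR P X D1 D2 S Y0 Y2 q)
    (d : ℝ × ℝ) (hd : d.2 ∈ ({0, 1} : Set ℝ))
    (h : 𝓧 → ℝ) (hh : Measurable h) (C : ℝ) (hC : ∀ x, |h x| ≤ C) :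
    ∫ ω, ind (evD D1 D2 d ∩ {ω | S ω = 1}) ω * h (X ω) ∂P
      = ∫ ω, ind (evD D1 D2 d) ω * q d.2 (X ω) * h (X ω) ∂P := by
  have key := hMAR.2.2 _ hd (fun p => ind {a : ℝ | a = d.1} p.1)
    ((ind_meas (measurableSet_singleton d.1)).comp measurable_fst)
    ⟨1, fun p => ind_abs_le _ _⟩ h hh ⟨C, hC⟩
  have e1 : ∀ ω, ind (evD2 D2 d.2) ω * S ω * ind {a : ℝ | a = d.1} (D1 ω) * h (X ω) =
      ind (evD D1 D2 d ∩ {ω | S ω = 1}) ω * h (X ω) := fun ω => by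
    by_cases h1 : D1 ω = d.1 <;> by_cases h2 : D2 ω = d.2 <;> rcases hSv ω with h3 | h3 <;>
      simp [ind, evD, evD2, h1, h2, h3]
  have e2 : ∀ ω, ind (evD2 D2 d.2) ω * q d.2 (X ω) * ind {a : ℝ | a = d.1} (D1 ω) * h (X ω) =
      ind (evD D1 D2 d) ω * q d.2 (X ω) * h (X ω) := fun ω => by
    by_cases h1 : D1 ω = d.1 <;> by_cases h2 : D2 ω = d.2 <;>
      simp [ind, evD, evD2, h1, h2]
  simp only [e1, e2] at key
  exact key

lemma cc_eq [MeasurableSpace Ω] [MeasurableSpace 𝓧] {P : Measure Ω} [IsProbabilityMeasure P]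
    {X : Ω → 𝓧} (hX : Measurable X) {Y0 Y2 D1 D2 S : Ω → ℝ}
    (hD1 : Measurable D1) (hD2 : Measurable D2) (hS : Measurable S)
    (hY0 : Measurable Y0) (hY2 : Measurable Y2)
    (hY0i : Integrable Y0 P) (hY2i : Integrable Y2 P)
    (hSv : ∀ ω, S ω = 0 ∨ S ω = 1)
    {q : ℝ → 𝓧 → ℝ} (hMAR : MAR P X D1 D2 S Y0 Y2 q)
    (d : ℝ × ℝ) (hd : d.2 ∈ ({0, 1} : Set ℝ)) {m k : 𝓧 → ℝ}
    (hm : IsCondMeanGiven P X (evD D1 D2 d ∩ {ω | S ω = 1}) (fun ω => Y2 ω - Y0 ω) m)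
    (hk : IsCondMeanGiven P X (evD D1 D2 d) (fun ω => Y2 ω - Y0 ω) k) :
    ∀ᵐ ω ∂P, ω ∈ evD D1 D2 d → m (X ω) - k (X ω) = 0 := by
  have hA := evD_meas hD1 hD2 d
  have hki := cm_int hX hA (hY2i.sub hY0i) hk
  have hqm : Measurable (q d.2) := (hMAR.1 _ hd).1
  have hqb := hMAR.2.1 _ hd
  -- bounded version of the propensity
  let q' : 𝓧 → ℝ := fun x => max 0 (min (q d.2 x) 1)
  have hq'm : Measurable q' := measurable_const.max (hqm.min measurable_const)
  have hq'b : ∀ x, |q' x| ≤ 1 := fun x => by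
    rw [abs_of_nonneg (le_max_left _ _)]
    exact max_le zero_le_one (min_le_right _ _)
  have hqq : ∀ᵐ ω ∂P, q d.2 (X ω) = q' (X ω) := by
    filter_upwards [hqb] with ω hω
    simp [q', min_eq_left hω.2, max_eq_right hω.1.le]
  have main : ∀ n : ℕ, ∀ᵐ ω ∂P, ω ∈ evD D1 D2 d →
      (m (X ω) - k (X ω)) * (q' (X ω) * ind {x | |m x| ≤ (n:ℝ)} (X ω)) = 0 := by
    intro n
    have hBm : MeasurableSet {x | |m x| ≤ (n:ℝ)} := measurableSet_le hm.1.abs measurable_const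
    have hmb : ∀ x, |m x * ind {x | |m x| ≤ (n:ℝ)} x| ≤ n := fun x => by
      by_cases hx : |m x| ≤ n <;> simp [ind, hx]
    have hmi : Integrable (fun ω => ind (evD D1 D2 d) ω *
        (m (X ω) * ind {x | |m x| ≤ (n:ℝ)} (X ω))) P :=
      int_mul ((integrable_const (1:ℝ)).indicator hA)
        ((hm.1.mul (ind_meas hBm)).comp hX) n (fun ω => hmb _)
    have hmi' : ∀ (h : 𝓧 → ℝ), Measurable h → ∀ C, (∀ x, |h x| ≤ C) →
        Integrable (fun ω => ind (evD D1 D2 d) ω *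
        (m (X ω) * ind {x | |m x| ≤ (n:ℝ)} (X ω)) * h (X ω)) P := fun h hh C hC =>
      int_mul hmi (hh.comp hX) C (fun ω => hC _)
    have hki' : ∀ (h : 𝓧 → ℝ), Measurable h → ∀ C, (∀ x, |h x| ≤ C) →
        Integrable (fun ω => ind (evD D1 D2 d) ω * k (X ω) * h (X ω)) P := fun h hh C hC =>
      int_mul hki (hh.comp hX) C (fun ω => hC _)
    have hbm : Measurable fun x => q' x * ind {x | |m x| ≤ (n:ℝ)} x := hq'm.mul (ind_meas hBm)
    have hbb : ∀ x, |q' x * ind {x | |m x| ≤ (n:ℝ)} x| ≤ 1 := fun x => by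
      rw [abs_mul]
      have := hq'b x
      have := ind_abs_le {x | |m x| ≤ (n:ℝ)} x
      nlinarith [abs_nonneg (q' x), abs_nonneg (ind {x | |m x| ≤ (n:ℝ)} x)]
    refine zero_on (u := fun x => (m x - k x) * (q' x * ind {x | |m x| ≤ (n:ℝ)} x))
      ((hm.1.sub hk.1).mul hbm) ?_ ?_
    · refine ((hmi' q' hq'm 1 hq'b).sub (hki' _ hbm 1 hbb)).congr
        (Filter.Eventually.of_forall fun ω => ?_)
      simp only [Pi.sub_apply]
      ring
    · rintro h hh ⟨C, hC⟩
      have hIh : ∀ x, |ind {x | |m x| ≤ (n:ℝ)} x * h x| ≤ C := fun x => by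
        rw [abs_mul]
        have h1 := ind_abs_le {x | |m x| ≤ (n:ℝ)} x
        have h2 := hC x
        nlinarith [abs_nonneg (h x)]
      have hqIh : ∀ x, |q' x * (ind {x | |m x| ≤ (n:ℝ)} x * h x)| ≤ C := fun x => by
        rw [abs_mul]
        have h1 := hq'b x
        have h2 := hIh x
        nlinarith [abs_nonneg (ind {x | |m x| ≤ (n:ℝ)} x * h x)]
      have hqh : ∀ x, |q' x * h x| ≤ C := fun x => by
        rw [abs_mul]
        have h1 := hq'b x
        have h2 := hC x
        nlinarith [abs_nonneg (h x)]
      have hmIh : ∀ x, |m x * (ind {x | |m x| ≤ (n:ℝ)} x * h x)| ≤ n * C := fun x => by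
        rw [← mul_assoc, abs_mul]
        have h1 := hmb x
        have h2 := hC x
        exact mul_le_mul h1 h2 (abs_nonneg _) (Nat.cast_nonneg n)
      have hIhm : Measurable fun x => ind {x | |m x| ≤ (n:ℝ)} x * h x := (ind_meas hBm).mul hh
      have a1 := hm.2 _ hIhm ⟨C, hIh⟩
      have a2 := mar_ext hX hD1 hD2 hS hY0 hY2 hY0i hY2i hSv hMAR d hd _ hIhm C hIh
      have a3 := mar_one hSv hMAR d hd _ (hm.1.mul hIhm) _ hmIh
      have a4 := hk.2 _ (hq'm.mul hIhm) ⟨C, hqIh⟩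
      have b2 : ∫ ω, ind (evD D1 D2 d) ω * q d.2 (X ω) * (Y2 ω - Y0 ω) *
          (ind {x | |m x| ≤ (n:ℝ)} (X ω) * h (X ω)) ∂P
          = ∫ ω, ind (evD D1 D2 d) ω * (Y2 ω - Y0 ω) *
            (q' (X ω) * (ind {x | |m x| ≤ (n:ℝ)} (X ω) * h (X ω))) ∂P := by
        refine integral_congr_ae ?_
        filter_upwards [hqq] with ω hω
        rw [hω]; ring
      have b3 : ∫ ω, ind (evD D1 D2 d) ω * q d.2 (X ω) *
          (m (X ω) * (ind {x | |m x| ≤ (n:ℝ)} (X ω) * h (X ω))) ∂P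
          = ∫ ω, ind (evD D1 D2 d) ω * (m (X ω) * ind {x | |m x| ≤ (n:ℝ)} (X ω)) *
            (q' (X ω) * h (X ω)) ∂P := by
        refine integral_congr_ae ?_
        filter_upwards [hqq] with ω hω
        rw [hω]; ring
      have b1 : ∫ ω, ind (evD D1 D2 d ∩ {ω | S ω = 1}) ω * m (X ω) *
          (ind {x | |m x| ≤ (n:ℝ)} (X ω) * h (X ω)) ∂P
          = ∫ ω, ind (evD D1 D2 d ∩ {ω | S ω = 1}) ω *
          (m (X ω) * (ind {x | |m x| ≤ (n:ℝ)} (X ω) * h (X ω))) ∂P := by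
        simp only [mul_assoc]
      have fin : ∫ ω, ind (evD D1 D2 d) ω * (m (X ω) * ind {x | |m x| ≤ (n:ℝ)} (X ω)) *
            (q' (X ω) * h (X ω)) ∂P = ∫ ω, ind (evD D1 D2 d) ω * k (X ω) *
            (q' (X ω) * (ind {x | |m x| ≤ (n:ℝ)} (X ω) * h (X ω))) ∂P :=
        b3.symm.trans (a3.symm.trans (b1.symm.trans (a1.symm.trans (a2.trans (b2.trans a4)))))
      rw [← sub_eq_zero, ← integral_sub
        (hmi' (fun x => q' x * h x) (hq'm.mul hh) C hqh)
        (hki' (fun x => q' x * (ind {x | |m x| ≤ (n:ℝ)} x * h x)) (hq'm.mul hIhm) C hqIh)] at fin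
      rw [← fin]
      refine integral_congr_ae (Filter.Eventually.of_forall fun ω => ?_)
      simp only [Pi.mul_apply]
      ring
  filter_upwards [ae_all_iff.2 main, hqb, hqq] with ω h1 h2 h3 h4
  obtain ⟨N, hN⟩ := exists_nat_ge |m (X ω)|
  have := h1 N h4
  have hp : q' (X ω) ≠ 0 := by rw [← h3]; exact h2.1.ne'
  simpa [ind, hN, hp] using this

/-- Complete-case conditional contrast:
`E[ΔY ∣ D = d, S = 1, X] − E[ΔY ∣ D = d', S = 1, X] = E[Y₂(d) − Y₂(d') ∣ D = d, X]` a.s. -/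
theorem statement_16
    [MeasurableSpace Ω] [m𝓧 : MeasurableSpace 𝓧]
    (P : Measure Ω) [IsProbabilityMeasure P]
    (X : Ω → 𝓧) (hX : Measurable X)
    (Y0 Y2 D1 D2 S : Ω → ℝ)
    (hY0 : Measurable Y0) (hY2 : Measurable Y2)
    (hD1 : Measurable D1) (hD2 : Measurable D2) (hS : Measurable S)
    (hY0i : Integrable Y0 P) (hY2i : Integrable Y2 P)
    (hD1v : ∀ ω, D1 ω = 0 ∨ D1 ω = 1) (hD2v : ∀ ω, D2 ω = 0 ∨ D2 ω = 1)
    (hSv : ∀ ω, S ω = 0 ∨ S ω = 1)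
    (Y0p Y2p : ℝ × ℝ → Ω → ℝ)
    (hY0p : ∀ e ∈ allPaths, Measurable (Y0p e) ∧ Integrable (Y0p e) P)
    (hY2p : ∀ e ∈ allPaths, Measurable (Y2p e) ∧ Integrable (Y2p e) P)
    (hcons0 : ∀ ω, Y0 ω = Y0p (D1 ω, D2 ω) ω)
    (hcons2 : ∀ ω, Y2 ω = Y2p (D1 ω, D2 ω) ω)
    (d : ℝ × ℝ) (hd : d ∈ threePaths)
    (hDIDd : DID P X D1 D2 Y0p Y2p d) (hDIDd' : DID P X D1 D2 Y0p Y2p (0, 0))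
    (q : ℝ → 𝓧 → ℝ) (hMAR : MAR P X D1 D2 S Y0 Y2 q)
    (pd pd' : 𝓧 → ℝ)
    (hpd : IsCondMeanGiven P X Set.univ (ind (evD D1 D2 d)) pd)
    (hpd' : IsCondMeanGiven P X Set.univ (ind (evD D1 D2 (0, 0))) pd')
    (hpdpos : ∀ᵐ ω ∂P, 0 < pd (X ω)) (hpd'pos : ∀ᵐ ω ∂P, 0 < pd' (X ω))
    (hdS1 : 0 < P (evD D1 D2 d ∩ {ω | S ω = 1}))
    (hd'S1 : 0 < P (evD D1 D2 (0, 0) ∩ {ω | S ω = 1}))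
    (mS mS' : 𝓧 → ℝ)
    (hmS : IsCondMeanGiven P X (evD D1 D2 d ∩ {ω | S ω = 1}) (fun ω => Y2 ω - Y0 ω) mS)
    (hmS' : IsCondMeanGiven P X (evD D1 D2 (0, 0) ∩ {ω | S ω = 1})
        (fun ω => Y2 ω - Y0 ω) mS')
    (g : 𝓧 → ℝ)
    (hg : IsCondMeanGiven P X (evD D1 D2 d) (fun ω => Y2p d ω - Y2p (0, 0) ω) g) :
    ∀ᵐ ω ∂P, mS (X ω) - mS' (X ω) = g (X ω) := by
  have hd2 : d.2 ∈ ({0, 1} : Set ℝ) := by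
    rcases hd with rfl | rfl | rfl <;> simp
  have hda : d ∈ allPaths := by
    rcases hd with rfl | rfl | rfl <;> simp [allPaths]
  have h0a : ((0, 0) : ℝ × ℝ) ∈ allPaths := by simp [allPaths]
  have hA := evD_meas hD1 hD2 d
  obtain ⟨hna, tr, htr, htrd⟩ := hDIDd
  obtain ⟨-, tr', htr', htrd'⟩ := hDIDd'
  have hZ0 : Integrable (fun ω => Y2p (0, 0) ω - Y0p (0, 0) ω) P :=
    (hY2p _ h0a).2.sub (hY0p _ h0a).2
  have hG : Integrable (fun ω => Y2p d ω - Y2p (0, 0) ω) P :=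
    (hY2p _ hda).2.sub (hY2p _ h0a).2
  have hgi := cm_int hX hA hG hg
  have hti := cm_int hX hA hZ0 htrd
  have hk : IsCondMeanGiven P X (evD D1 D2 d) (fun ω => Y2 ω - Y0 ω) (fun x => g x + tr x) := by
    refine ⟨hg.1.add htr.1, ?_⟩
    rintro h hh ⟨C, hC⟩
    have im : ∀ Z : Ω → ℝ, Integrable Z P → Integrable (fun ω => Z ω * h (X ω)) P :=
      fun Z hZ => int_mul hZ (hh.comp hX) C fun ω => hC _
    have c1 := hna h hh ⟨C, hC⟩
    have c2 := hg.2 h hh ⟨C, hC⟩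
    have c3 := htrd.2 h hh ⟨C, hC⟩
    have i1 := im _ (int_ind_mul hA (hY0p _ hda).2)
    have i2 := im _ (int_ind_mul hA (hY0p _ h0a).2)
    have i3 := im _ (int_ind_mul hA hG)
    have i4 := im _ (int_ind_mul hA hZ0)
    have L : ∫ ω, ind (evD D1 D2 d) ω * (Y2 ω - Y0 ω) * h (X ω) ∂P
        = ∫ ω, ((ind (evD D1 D2 d) ω * (Y2p d ω - Y2p (0, 0) ω) * h (X ω)
          + ind (evD D1 D2 d) ω * (Y2p (0, 0) ω - Y0p (0, 0) ω) * h (X ω))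
          + (ind (evD D1 D2 d) ω * Y0p (0, 0) ω * h (X ω)
          - ind (evD D1 D2 d) ω * Y0p d ω * h (X ω))) ∂P := by
      congr 1
      funext ω
      rcases ind_cases (evD D1 D2 d) ω with ⟨⟨e1, e2⟩, h2⟩ | ⟨h1, h2⟩
      · rw [h2, hcons0, hcons2, e1, e2]; ring
      · rw [h2]; ring
    have e1 := integral_add (i3.add i4) (i2.sub i1)
    have e2 := integral_add i3 i4
    have e3 := integral_sub i2 i1
    have e4 := integral_add (im _ hgi) (im _ hti)
    simp only [Pi.add_apply, Pi.sub_apply] at e1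
    have R : ∫ ω, ind (evD D1 D2 d) ω * (g (X ω) + tr (X ω)) * h (X ω) ∂P
        = ∫ ω, (ind (evD D1 D2 d) ω * g (X ω) * h (X ω)
          + ind (evD D1 D2 d) ω * tr (X ω) * h (X ω)) ∂P := by
      congr 1
      funext ω
      ring
    simp only [] at c1 c2 c3 ⊢
    rw [L, R]
    linarith
  have hk' : IsCondMeanGiven P X (evD D1 D2 (0, 0)) (fun ω => Y2 ω - Y0 ω) tr' := by
    refine ⟨htr'.1, fun h hh hb => ?_⟩
    rw [← htrd'.2 h hh hb]
    congr 1
    funext ω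
    rcases ind_cases (evD D1 D2 (0, 0)) ω with ⟨⟨e1, e2⟩, h2⟩ | ⟨h1, h2⟩
    · simp only [hcons0, hcons2, e1, e2]
    · rw [h2]; ring
  have r1 := zero_all hX hA hpd hpdpos (u := fun x => mS x - (g x + tr x))
    (hmS.1.sub hk.1)
    (cc_eq hX hD1 hD2 hS hY0 hY2 hY0i hY2i hSv hMAR d hd2 hmS hk)
  have r2 := zero_all hX (evD_meas hD1 hD2 (0, 0)) hpd' hpd'pos (u := fun x => mS' x - tr' x)
    (hmS'.1.sub hk'.1)
    (cc_eq hX hD1 hD2 hS hY0 hY2 hY0i hY2i hSv hMAR (0, 0) (by simp) hmS' hk')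
  have t1 := cm_int hX MeasurableSet.univ hZ0 htr
  have t2 := cm_int hX MeasurableSet.univ hZ0 htr'
  have r3 : ∀ᵐ ω ∂P, ω ∈ Set.univ → tr (X ω) - tr' (X ω) = 0 := by
    refine zero_on (u := fun x => tr x - tr' x) (htr.1.sub htr'.1) ?_ ?_
    · refine (t1.sub t2).congr (Filter.Eventually.of_forall fun ω => ?_)
      simp only [Pi.sub_apply]
      ring
    · rintro h hh ⟨C, hC⟩
      have c := (htr.2 h hh ⟨C, hC⟩).symm.trans (htr'.2 h hh ⟨C, hC⟩)
      rw [← sub_eq_zero, ← integral_sub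
        (int_mul (b := fun ω => h (X ω)) t1 (hh.comp hX) C fun ω => hC _)
        (int_mul (b := fun ω => h (X ω)) t2 (hh.comp hX) C fun ω => hC _)] at c
      rw [← c]
      congr 1
      funext ω
      ring
  filter_upwards [r1, r2, r3] with ω h1 h2 h3
  have h3 := h3 (Set.mem_univ _)
  linarith

end DIDMissing
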